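/- arXiv:math/9712242 — 2 statements merged into one kernel-verified Lean document; each statement's English description precedes it below -/
import Mathlib

section
/- Let q be a prime power with $q > n$, and let M be an invertible diagonal $n \times n$ matrix over $\mathbb{F}_q$ with n distinct eigenvalues. Then the number of complete flags $0 = V_0 \subset V_1 \subset \cdots \subset V_n = \mathbb{F}_q^n$ such that $M V_j \subseteq V_{j+1}$ for all $0 \le j \le n-1$ equals $\sum_{\pi \in S_n} q^{d(\pi)}$, the generating function for permutations of n letters by number of descents. -/
/-!
Write `r = q - 1`, let `E_T` be the coordinate subspace on `T`, and call a
*continuation* of `V` a chain from `V` up to the whole space satisfying the Hessenberg condition. Both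
sides of the identity satisfy the same recurrence over subsets of the coordinates.

*Flags.* If `V` is not `M`-invariant and `V + MV` has dimension `dim V + 1`, the next term of the
flag must be `V + MV`, which has the same coordinate support; so the continuations of `V` are those
of the first invariant subspace reached. As the eigenvalues are distinct, an invariant subspace is
`E_S` with `S` its support (`eq_coordSubspace_of_invariant`, `chainCount_eq_coordSubspace`). From
`E_T`, any next term `E_T + ⟨v⟩` is allowed, with `v ≠ 0` supported off `T`; each one arises from
exactly `r` vectors `v`, and exactly `r ^ |U|` vectors have support `U`. Hence the number `N(T)` of
continuations of `E_T` satisfies `r N(T) = ∑_{∅ ≠ U ⊆ Tᶜ} r ^ |U| N(T ∪ U)`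
(`chainCount_recurrence`).

*Permutations.* Let `P(S, a)` be the sum of `q ^ descents` over the orderings of `S`, preceded by
the entry `a`. Writing `q = 1 + r` at each descent and collecting the initial run `T` of descents
at which `r` is chosen gives `P(S, a) = ∑_{T ⊆ S, T < a} r ^ |T| P(S \ T, 0)` (`orderSum_eq_sum_powerset`). If `a` exceeds
every element of `S ≠ ∅`, the left side is `q P(S, 0)`; cancelling the term `T = ∅` yields the
recurrence of `N` with `S = Tᶜ` (`orderSum_recurrence`). Thus `N(∅) = P(univ, 0)`.
-/

/-- The number of descents of a permutation `π` of `{1, …, n}`: the number of indices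
`i` with `1 ≤ i ≤ n-1` and `π(i) > π(i+1)` (here indexed by `Fin (n-1)`, zero-based). -/
def descents {n : ℕ} (π : Equiv.Perm (Fin n)) : ℕ :=
  (Finset.univ.filter fun i : Fin (n - 1) =>
    π ⟨(i : ℕ) + 1, by have := i.isLt; omega⟩ < π ⟨(i : ℕ), by have := i.isLt; omega⟩).card

/-- `hessFlagCount F m dg` is the number of complete flags
`0 = V₀ ⊂ V₁ ⊂ ⋯ ⊂ V_m = F^m` (with `dim Vᵢ = i`) such that `M Vⱼ ⊆ V_{j+1}` for all
`0 ≤ j ≤ m - 1`, where `M` is the diagonal matrix with diagonal entries `dg`. -/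
noncomputable def hessFlagCount (F : Type) [Field F] [Fintype F] [DecidableEq F]
    (m : ℕ) (dg : Fin m → F) : ℕ :=
  Nat.card {f : Fin (m + 1) → Submodule F (Fin m → F) //
    f 0 = ⊥ ∧ f (Fin.last m) = ⊤ ∧ Monotone f ∧
    (∀ i : Fin (m + 1), Module.finrank F (f i) = (i : ℕ)) ∧
    ∀ j : Fin m, (f j.castSucc).map (Matrix.diagonal dg).mulVecLin ≤ f j.succ}

/-! ### Orderings weighted by descents -/

/-- The sum of `(r + 1) ^ descents` over the orderings of `S`, each preceded by the entry `a`, so that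
a first entry below `a` counts as a descent; `a = 0` gives no such extra descent. The recursion is on
the number `k` of entries still to be placed, meant to be `S.card`. -/
def orderSum {n : ℕ} (r : ℕ) : ℕ → Finset (Fin n) → ℕ → ℕ
  | 0, _, _ => 1
  | k + 1, S, a => ∑ b ∈ S, (if (b : ℕ) < a then r + 1 else 1) * orderSum r k (S.erase b) b

/-- A nonempty finset is `insert b T` for a unique pair of its maximum `b` and a set `T` below it. -/
theorem sum_nonempty_eq_sum_max {n : ℕ} (S : Finset (Fin n)) (a : ℕ) (g : Finset (Fin n) → ℕ) :
    ∑ T ∈ S.powerset.filter (fun T : Finset (Fin n) => ∀ t ∈ T, (t : ℕ) < a), g T =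
      g ∅ + ∑ b ∈ S.filter (fun b : Fin n => (b : ℕ) < a),
        ∑ T ∈ (S.erase b).powerset.filter (fun T : Finset (Fin n) => ∀ t ∈ T, (t : ℕ) < b), g (insert b T) := by
  classical
  have h0 : (∅ : Finset (Fin n)) ∈ S.powerset.filter (fun T : Finset (Fin n) => ∀ t ∈ T, (t : ℕ) < a) := by simp
  rw [← Finset.add_sum_erase _ _ h0, Finset.sum_sigma']
  congr 1
  symm
  refine Finset.sum_bij (fun x _ => insert x.1 x.2) ?_ ?_ ?_ ?_
  · rintro ⟨b, T⟩ h
    simp only [Finset.mem_sigma, Finset.mem_filter, Finset.mem_powerset] at h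
    obtain ⟨⟨hb, hba⟩, hT, hTb⟩ := h
    simp only [Finset.mem_erase, Finset.mem_filter, Finset.mem_powerset]
    refine ⟨Finset.insert_ne_empty _ _, ?_, ?_⟩
    · exact Finset.insert_subset hb (hT.trans (Finset.erase_subset _ _))
    · intro t ht
      rcases Finset.mem_insert.1 ht with rfl | ht
      · exact hba
      · exact (hTb t ht).trans hba
  · rintro ⟨b, T⟩ h ⟨b', T'⟩ h' heq
    simp only [Finset.mem_sigma, Finset.mem_filter, Finset.mem_powerset] at h h' heq
    obtain ⟨⟨hb, hba⟩, hT, hTb⟩ := h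
    obtain ⟨⟨hb', hba'⟩, hT', hTb'⟩ := h'
    have e : b = b' := by
      have h1 : b ∈ insert b' T' := heq ▸ Finset.mem_insert_self _ _
      have h2 : b' ∈ insert b T := heq ▸ Finset.mem_insert_self _ _
      rcases Finset.mem_insert.1 h1 with h1 | h1
      · exact h1
      rcases Finset.mem_insert.1 h2 with h2 | h2
      · exact h2.symm
      have := hTb' _ h1
      have := hTb _ h2
      omega
    subst e
    have hbT : b ∉ T := fun h => (Finset.mem_erase.1 (hT h)).1 rfl
    have hbT' : b ∉ T' := fun h => (Finset.mem_erase.1 (hT' h)).1 rfl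
    have : T = T' := by
      rw [← Finset.erase_insert hbT, heq, Finset.erase_insert hbT']
    rw [this]
  · intro T hT
    simp only [Finset.mem_erase, Finset.mem_filter, Finset.mem_powerset] at hT
    obtain ⟨hne, hTS, hTa⟩ := hT
    have hne := Finset.nonempty_iff_ne_empty.2 hne
    have hm := Finset.max'_mem T hne
    refine ⟨⟨T.max' hne, T.erase (T.max' hne)⟩, ?_, Finset.insert_erase hm⟩
    simp only [Finset.mem_sigma, Finset.mem_filter, Finset.mem_powerset]
    refine ⟨⟨hTS hm, hTa _ hm⟩, Finset.erase_subset_erase _ hTS, ?_⟩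
    intro t ht
    exact Finset.lt_max'_of_mem_erase_max' T hne ht
  · intros; rfl

/-- Expansion of the factor `r + 1` of a descent at the first entry as `1 + r`. -/
theorem orderSum_split {n : ℕ} (r k : ℕ) (S : Finset (Fin n)) (a : ℕ) :
    orderSum r (k + 1) S a = orderSum r (k + 1) S 0 +
      r * ∑ b ∈ S.filter (fun b : Fin n => (b : ℕ) < a), orderSum r k (S.erase b) b := by
  simp only [orderSum, Finset.sum_filter, Finset.mul_sum, ← Finset.sum_add_distrib]
  refine Finset.sum_congr rfl fun b _ => ?_
  simp only [Nat.not_lt_zero, if_false]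
  split_ifs <;> ring

/-- Iterated expansion of `r + 1` as `1 + r`: `T` is the initial run of descents at which the summand
`r` is chosen, and the entries after it are ordered freely. -/
theorem orderSum_eq_sum_powerset {n : ℕ} (r k : ℕ) (S : Finset (Fin n)) (hS : S.card = k) (a : ℕ) :
    orderSum r k S a = ∑ T ∈ S.powerset.filter (fun T : Finset (Fin n) => ∀ t ∈ T, (t : ℕ) < a),
      r ^ T.card * orderSum r (S \ T).card (S \ T) 0 := by
  induction k generalizing S a with
  | zero =>
    rw [Finset.card_eq_zero] at hS
    subst hS
    simp [orderSum, Finset.filter_singleton]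
  | succ k ih =>
    rw [orderSum_split, sum_nonempty_eq_sum_max, Finset.mul_sum]
    congr 1
    · simp [hS]
    · refine Finset.sum_congr rfl fun b hb => ?_
      have hbS := (Finset.mem_filter.1 hb).1
      rw [ih _ (by rw [Finset.card_erase_of_mem hbS, hS]; rfl), Finset.mul_sum]
      refine Finset.sum_congr rfl fun T hT => ?_
      have hbT : b ∉ T := fun h =>
        (Finset.mem_erase.1 (Finset.mem_powerset.1 (Finset.mem_filter.1 hT).1 h)).1 rfl
      have e : S.erase b \ T = S \ insert b T := by
        ext x; simp only [Finset.mem_sdiff, Finset.mem_erase, Finset.mem_insert]; tauto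
      rw [e, Finset.card_insert_of_notMem hbT]
      ring

theorem orderSum_recurrence {n : ℕ} (r k : ℕ) (S : Finset (Fin n)) (hS : S.card = k + 1) :
    r * orderSum r (k + 1) S 0 = ∑ T ∈ S.powerset.erase ∅,
      r ^ T.card * orderSum r (S \ T).card (S \ T) 0 := by
  -- preceded by `n`, the first entry of every ordering is a descent
  have h := orderSum_eq_sum_powerset r (k + 1) S hS n
  have h2 : orderSum r (k + 1) S n = (r + 1) * orderSum r (k + 1) S 0 := by
    simp [orderSum, Finset.mul_sum]
  rw [Finset.filter_true_of_mem (fun T _ t _ => t.isLt),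
    ← Finset.add_sum_erase _ _ (Finset.empty_mem_powerset S), h2] at h
  simp only [Finset.card_empty, pow_zero, one_mul, Finset.sdiff_empty, hS] at h
  linarith

/-- `(r + 1)` to the number of descents of the word `a, f 0, …, f (k - 1)`. -/
def runWeight {n : ℕ} (r : ℕ) {k : ℕ} (a : ℕ) (f : Fin k → Fin n) : ℕ :=
  ∏ i : Fin k, if (f i : ℕ) < (Fin.cons a (fun j => (f j : ℕ)) : Fin (k + 1) → ℕ) i.castSucc
    then r + 1 else 1

theorem runWeight_cons {n : ℕ} (r : ℕ) {k : ℕ} (a : ℕ) (b : Fin n) (g : Fin k → Fin n) :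
    runWeight r a (Fin.cons b g : Fin (k + 1) → Fin n) =
      (if (b : ℕ) < a then r + 1 else 1) * runWeight r b g := by
  unfold runWeight
  rw [Fin.prod_univ_succ]
  congr 1
  refine Finset.prod_congr rfl fun i _ => ?_
  have : (Fin.cons a (fun j => ((Fin.cons b g : Fin (k + 1) → Fin n) j : ℕ)) : Fin (k + 2) → ℕ)
      i.succ.castSucc = (Fin.cons (b : ℕ) (fun j => (g j : ℕ)) : Fin (k + 1) → ℕ) i.castSucc := by
    rw [← Fin.succ_castSucc, Fin.cons_succ]
    refine Fin.cases ?_ (fun j => ?_) i.castSucc <;> simp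
  rw [this]
  simp

open Classical in
theorem orderSum_eq_sum_injective {n : ℕ} (r k : ℕ) (S : Finset (Fin n)) (a : ℕ) :
    orderSum r k S a = ∑ f : Fin k → Fin n,
      if Function.Injective f ∧ ∀ i, f i ∈ S then runWeight r a f else 0 := by
  induction k generalizing S a with
  | zero => simp [orderSum, runWeight, Function.injective_of_subsingleton]
  | succ k ih =>
    rw [← (Fin.consEquiv (fun _ : Fin (k + 1) => Fin n)).sum_comp, Fintype.sum_prod_type, orderSum,
      ← Finset.sum_filter_add_sum_filter_not Finset.univ (· ∈ S), Finset.filter_mem_eq_inter,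
      Finset.univ_inter]
    have hz : ∑ x ∈ Finset.univ.filter (fun x : Fin n => x ∉ S), ∑ g : Fin k → Fin n,
        (if Function.Injective (Fin.consEquiv (fun _ : Fin (k + 1) => Fin n) (x, g)) ∧
          ∀ i, (Fin.consEquiv (fun _ : Fin (k + 1) => Fin n) (x, g)) i ∈ S then
          runWeight r a (Fin.consEquiv (fun _ : Fin (k + 1) => Fin n) (x, g)) else 0) = 0 := by
      refine Finset.sum_eq_zero fun b hb => Finset.sum_eq_zero fun g _ => if_neg ?_
      rintro ⟨_, h⟩
      exact (Finset.mem_filter.1 hb).2 (by simpa [Fin.consEquiv] using h 0)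
    rw [hz, add_zero]
    refine Finset.sum_congr rfl fun b hb => ?_
    rw [ih, Finset.mul_sum]
    refine Finset.sum_congr rfl fun g _ => ?_
    have e : (Fin.consEquiv (fun _ : Fin (k + 1) => Fin n)) (b, g) = Fin.cons b g := rfl
    rw [e, runWeight_cons, mul_ite, mul_zero]
    refine if_congr ?_ rfl rfl
    rw [Fin.cons_injective_iff, Fin.forall_fin_succ]
    simp only [Finset.mem_erase, Fin.cons_zero, Fin.cons_succ, Set.mem_range, not_exists]
    constructor
    · rintro ⟨h1, h2⟩; exact ⟨⟨fun i => (h2 i).1, h1⟩, hb, fun i => (h2 i).2⟩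
    · rintro ⟨⟨h1, h2⟩, _, h3⟩; exact ⟨h2, fun i => ⟨h1 i, h3 i⟩⟩

theorem runWeight_perm {n : ℕ} (r : ℕ) (π : Equiv.Perm (Fin n)) :
    runWeight r 0 π = (r + 1) ^ descents π := by
  cases n with
  | zero => simp [runWeight, descents]
  | succ m =>
    unfold runWeight descents
    rw [Fin.prod_univ_succ, ← Finset.prod_const, Finset.prod_filter]
    simp only [Fin.castSucc_zero, Fin.cons_zero, Nat.not_lt_zero, if_false, one_mul]
    refine Finset.prod_congr rfl fun i _ => ?_
    rw [← Fin.succ_castSucc, Fin.cons_succ]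
    rfl

theorem orderSum_univ {n : ℕ} (r : ℕ) :
    orderSum r n (Finset.univ : Finset (Fin n)) 0 =
      ∑ π : Equiv.Perm (Fin n), (r + 1) ^ descents π := by
  classical
  rw [orderSum_eq_sum_injective, ← Finset.sum_filter]
  symm
  refine Finset.sum_bij (fun π _ => (π : Fin n → Fin n)) ?_ ?_ ?_ ?_
  · intro π _; simp [π.injective]
  · intro π _ σ _ h; exact DFunLike.coe_injective h
  · intro f hf
    have hf : Function.Injective f := by simpa using hf
    exact ⟨Equiv.ofBijective f (Finite.injective_iff_bijective.1 hf), Finset.mem_univ _, rfl⟩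
  · intro π _; exact (runWeight_perm r π).symm

/-! ### Counting chains of a relation -/

open Classical in
/-- The number of chains `a = a₀, a₁, …, a_k` with `R aᵢ aᵢ₊₁` for all `i`. -/
noncomputable def chainCount {α : Type*} [Fintype α] (R : α → α → Prop) : ℕ → α → ℕ
  | 0, _ => 1
  | k + 1, a => ∑ b ∈ Finset.univ.filter (fun b => R a b), chainCount R k b

/-- A chain of `k + 1` steps from `a` is a first step to `b` and a chain of `k` steps from `b`. -/
def chainConsEquiv {α : Type*} (R : α → α → Prop) (k : ℕ) (a : α) :
    {f : Fin (k + 1 + 1) → α // f 0 = a ∧ ∀ j : Fin (k + 1), R (f j.castSucc) (f j.succ)} ≃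
      Σ b : {b // R a b},
        {g : Fin (k + 1) → α // g 0 = b ∧ ∀ j : Fin k, R (g j.castSucc) (g j.succ)} where
  toFun f := ⟨⟨f.1 1, by simpa [f.2.1] using f.2.2 0⟩, ⟨Fin.tail f.1, rfl, fun j => by
    simpa [Fin.tail] using f.2.2 j.succ⟩⟩
  invFun x := ⟨Fin.cons a x.2.1, rfl, fun j => by
    refine Fin.cases ?_ (fun i => ?_) j
    · simpa [x.2.2.1] using x.1.2
    · rw [← Fin.succ_castSucc, Fin.cons_succ, Fin.cons_succ]
      exact x.2.2.2 i⟩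
  left_inv f := by
    apply Subtype.ext
    funext i
    refine Fin.cases ?_ (fun j => ?_) i
    · simpa using f.2.1.symm
    · rfl
  right_inv x := by
    obtain ⟨⟨b, hb⟩, ⟨g, hg0, hg⟩⟩ := x
    dsimp at hg0
    subst hg0
    rfl

theorem card_chains {α : Type*} [Fintype α] (R : α → α → Prop) (k : ℕ) (a : α) :
    Nat.card {f : Fin (k + 1) → α // f 0 = a ∧ ∀ j : Fin k, R (f j.castSucc) (f j.succ)} =
      chainCount R k a := by
  classical
  induction k generalizing a with
  | zero =>
    have : Unique {f : Fin (0 + 1) → α // f 0 = a ∧ ∀ j : Fin 0, R (f j.castSucc) (f j.succ)} :=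
      { default := ⟨fun _ => a, rfl, fun j => j.elim0⟩
        uniq := fun f => Subtype.ext (funext fun i => by
          have : i = 0 := Fin.fin_one_eq_zero i
          rw [this]; exact f.2.1) }
    rw [Nat.card_unique]; rfl
  | succ k ih =>
    rw [Nat.card_congr (chainConsEquiv R k a), Nat.card_sigma, chainCount]
    simp only [ih]
    exact (Finset.sum_subtype _ (by simp) (fun b => chainCount R k b)).symm

noncomputable instance submoduleFintype (F : Type) [Field F] [Fintype F] (n : ℕ) :
    Fintype (Submodule F (Fin n → F)) := Fintype.ofFinite _

/-! ### Coordinate subspaces and invariant subspaces -/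

section Flags

variable {F : Type} [Field F] {n : ℕ}

/-- The span of the standard basis vectors indexed by `T`: the vectors vanishing off `T`. -/
def coordSubspace (F : Type) [Field F] {n : ℕ} (T : Finset (Fin n)) :
    Submodule F (Fin n → F) where
  carrier := {v | ∀ i, i ∉ T → v i = 0}
  add_mem' := fun {v w} hv hw i hi => by simp [hv i hi, hw i hi]
  zero_mem' := fun _ _ => rfl
  smul_mem' := fun c v hv i hi => by simp [hv i hi]

theorem mem_coordSubspace {T : Finset (Fin n)} {v : Fin n → F} :
    v ∈ coordSubspace F T ↔ ∀ i, i ∉ T → v i = 0 := Iff.rfl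

theorem single_mem_coordSubspace {T : Finset (Fin n)} {j : Fin n} (hj : j ∈ T) (c : F) :
    Pi.single j c ∈ coordSubspace F T := by
  intro i hi
  simp [show i ≠ j from fun h => hi (h ▸ hj)]

theorem coordSubspace_le {T : Finset (Fin n)} {V : Submodule F (Fin n → F)}
    (h : ∀ j ∈ T, Pi.single j (1 : F) ∈ V) : coordSubspace F T ≤ V := by
  intro v hv
  rw [pi_eq_sum_univ' v]
  refine Submodule.sum_mem _ fun j _ => ?_
  by_cases hj : j ∈ T
  · have := V.smul_mem (v j) (h j hj)
    convert this using 2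
  · rw [hv j hj, zero_smul]; exact V.zero_mem

theorem finrank_coordSubspace (T : Finset (Fin n)) :
    Module.finrank F (coordSubspace F T) = T.card := by
  have hli : LinearIndependent F (fun j : T => (Pi.single (j : Fin n) (1 : F) : Fin n → F)) := by
    have := (Pi.basisFun F (Fin n)).linearIndependent.comp (fun j : T => (j : Fin n))
      Subtype.val_injective
    convert this using 1
    ext j
    simp
  have h := finrank_span_eq_card hli
  rw [Fintype.card_coe] at h
  have : coordSubspace F T =
      Submodule.span F (Set.range fun j : T => (Pi.single (j : Fin n) (1 : F) : Fin n → F)) := by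
    apply le_antisymm
    · exact coordSubspace_le fun j hj => Submodule.subset_span ⟨⟨j, hj⟩, rfl⟩
    · rw [Submodule.span_le]
      rintro _ ⟨j, rfl⟩
      exact single_mem_coordSubspace j.2 1
  rw [this, h]

open Classical in
/-- The coordinates on which some vector of `V` is nonzero. -/
noncomputable def coordSupport (V : Submodule F (Fin n → F)) : Finset (Fin n) :=
  Finset.univ.filter fun j => ∃ v ∈ V, v j ≠ 0

theorem mem_coordSupport {V : Submodule F (Fin n → F)} {j : Fin n} :
    j ∈ coordSupport V ↔ ∃ v ∈ V, v j ≠ 0 := by simp [coordSupport]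

theorem coordSupport_subset_iff {V : Submodule F (Fin n → F)} {T : Finset (Fin n)} :
    coordSupport V ⊆ T ↔ V ≤ coordSubspace F T := by
  constructor
  · intro h v hv i hi
    by_contra hne
    exact hi (h (mem_coordSupport.2 ⟨v, hv, hne⟩))
  · intro h j hj
    obtain ⟨v, hv, hne⟩ := mem_coordSupport.1 hj
    by_contra hjT
    exact hne (h hv j hjT)

theorem le_coordSubspace_coordSupport (V : Submodule F (Fin n → F)) :
    V ≤ coordSubspace F (coordSupport V) := coordSupport_subset_iff.1 subset_rfl

theorem coordSupport_mono {V W : Submodule F (Fin n → F)} (h : V ≤ W) :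
    coordSupport V ⊆ coordSupport W :=
  coordSupport_subset_iff.2 (h.trans (le_coordSubspace_coordSupport W))

/-- The operator `M` given by the diagonal matrix with entries `d`. -/
abbrev diagMap (d : Fin n → F) : (Fin n → F) →ₗ[F] (Fin n → F) := (Matrix.diagonal d).mulVecLin

theorem diagMap_apply (d : Fin n → F) (v : Fin n → F) (i : Fin n) :
    diagMap d v i = d i * v i := by
  simp [diagMap, Matrix.mulVec_diagonal]

theorem map_diagMap_coordSubspace_le (d : Fin n → F) (T : Finset (Fin n)) :
    (coordSubspace F T).map (diagMap d) ≤ coordSubspace F T := by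
  rintro _ ⟨v, hv, rfl⟩ i hi
  rw [diagMap_apply, hv i hi, mul_zero]

/-- The product of the operators `M - d k` over `k ≠ j` projects `v` to a nonzero multiple of the `j`-th
basis vector, since the `d k` are distinct. -/
theorem single_mem_of_invariant {d : Fin n → F} (hd : Function.Injective d)
    {V : Submodule F (Fin n → F)} (hV : V.map (diagMap d) ≤ V) {v : Fin n → F} (hv : v ∈ V)
    {j : Fin n} (hj : v j ≠ 0) : Pi.single j (1 : F) ∈ V := by
  have key : ∀ s : Finset (Fin n), (fun i => (∏ k ∈ s, (d i - d k)) * v i) ∈ V := by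
    intro s
    induction s using Finset.induction_on with
    | empty => simpa using hv
    | insert a s ha ih =>
      have h1 := hV (Submodule.mem_map_of_mem ih)
      have h2 := V.sub_mem h1 (V.smul_mem (d a) ih)
      convert h2 using 1
      ext i
      rw [Finset.prod_insert ha, Pi.sub_apply, diagMap_apply, Pi.smul_apply, smul_eq_mul]
      ring
  have hne : (∏ k ∈ Finset.univ.erase j, (d j - d k)) * v j ≠ 0 := by
    refine mul_ne_zero (Finset.prod_ne_zero_iff.2 fun k hk => ?_) hj
    exact sub_ne_zero.2 fun h => (Finset.mem_erase.1 hk).1 (hd h).symm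
  have h := V.smul_mem ((∏ k ∈ Finset.univ.erase j, (d j - d k)) * v j)⁻¹
    (key (Finset.univ.erase j))
  convert h using 1
  ext i
  by_cases hij : i = j
  · subst hij
    rw [Pi.single_eq_same, Pi.smul_apply, smul_eq_mul, inv_mul_cancel₀ hne]
  · rw [Pi.single_eq_of_ne hij, Pi.smul_apply, smul_eq_mul,
      Finset.prod_eq_zero (f := fun k => d i - d k)
        (Finset.mem_erase.2 ⟨hij, Finset.mem_univ i⟩) (sub_self _), zero_mul, mul_zero]

theorem eq_coordSubspace_of_invariant {d : Fin n → F} (hd : Function.Injective d)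
    {V : Submodule F (Fin n → F)} (hV : V.map (diagMap d) ≤ V) :
    V = coordSubspace F (coordSupport V) := by
  refine le_antisymm (le_coordSubspace_coordSupport V) (coordSubspace_le fun j hj => ?_)
  obtain ⟨v, hv, hne⟩ := mem_coordSupport.1 hj
  exact single_mem_of_invariant hd hV hv hne

/-! ### Steps of Hessenberg flags -/

/-- `W` may follow `V` in a Hessenberg flag. -/
def HessStep (d : Fin n → F) (V W : Submodule F (Fin n → F)) : Prop :=
  V ≤ W ∧ Module.finrank F W = Module.finrank F V + 1 ∧ V.map (diagMap d) ≤ W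

/-- `V + MV` has dimension at most `dim V + 1`, expressed by a vector `u` with `MV ⊆ V + ⟨u⟩`. -/
def NearlyInvariant (d : Fin n → F) (V : Submodule F (Fin n → F)) : Prop :=
  ∃ u, V.map (diagMap d) ≤ V ⊔ Submodule.span F {u}

theorem NearlyInvariant.sup_span {d : Fin n → F} {V : Submodule F (Fin n → F)} {u : Fin n → F}
    (h : V.map (diagMap d) ≤ V ⊔ Submodule.span F {u}) :
    NearlyInvariant d (V ⊔ Submodule.span F {u}) := by
  refine ⟨diagMap d u, ?_⟩
  rw [Submodule.map_sup, Submodule.map_span, Set.image_singleton]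
  exact sup_le (h.trans le_sup_left) le_sup_right

/-- A nearly invariant, not invariant subspace has exactly one successor in a Hessenberg flag. -/
theorem hessStep_iff_eq {d : Fin n → F} {V : Submodule F (Fin n → F)} {u : Fin n → F}
    (h : V.map (diagMap d) ≤ V ⊔ Submodule.span F {u}) (hV : ¬ V.map (diagMap d) ≤ V)
    (W : Submodule F (Fin n → F)) : HessStep d V W ↔ W = V ⊔ Submodule.span F {u} := by
  have hu : u ∉ V := by
    intro hu
    apply hV
    rwa [sup_eq_left.2 (by simpa using hu)] at h
  have hr := Submodule.finrank_sup_span_singleton hu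
  constructor
  · rintro ⟨h1, h2, h3⟩
    have hlt : V < V ⊔ V.map (diagMap d) := left_lt_sup.2 hV
    have hlt := Submodule.finrank_lt_finrank_of_lt hlt
    have e1 : V ⊔ V.map (diagMap d) = W :=
      Submodule.eq_of_le_of_finrank_le (sup_le h1 h3) (by omega)
    have e2 : V ⊔ V.map (diagMap d) = V ⊔ Submodule.span F {u} :=
      Submodule.eq_of_le_of_finrank_le (sup_le le_sup_left h) (by omega)
    rw [← e1, e2]
  · rintro rfl
    exact ⟨le_sup_left, hr, h⟩

theorem coordSupport_sup_map (d : Fin n → F) (V : Submodule F (Fin n → F)) :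
    coordSupport (V ⊔ V.map (diagMap d)) = coordSupport V := by
  apply subset_antisymm
  · rw [coordSupport_subset_iff]
    refine sup_le (le_coordSubspace_coordSupport V) ?_
    exact (Submodule.map_mono (le_coordSubspace_coordSupport V)).trans
      (map_diagMap_coordSubspace_le d _)
  · exact coordSupport_mono le_sup_left

/-- The steps from a nearly invariant `V` are forced until the smallest coordinate subspace containing
`V` is reached, so `V` has as many continuations to a full flag as that subspace. -/
theorem chainCount_eq_coordSubspace [Fintype F] {d : Fin n → F} (hd : Function.Injective d) (k : ℕ)
    {V : Submodule F (Fin n → F)} (hk : Module.finrank F V + k = n) (hV : NearlyInvariant d V) :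
    chainCount (HessStep d) k V =
      chainCount (HessStep d) (n - (coordSupport V).card) (coordSubspace F (coordSupport V)) := by
  classical
  induction k generalizing V with
  | zero =>
    have hT : V = ⊤ := Submodule.eq_top_of_finrank_eq (by simpa using hk)
    have hs := eq_coordSubspace_of_invariant hd (V := V) (d := d) (by rw [hT]; exact le_top)
    have hc := finrank_coordSubspace (F := F) (coordSupport V)
    rw [← hs] at hc ⊢
    congr 1
    omega
  | succ k ih =>
    by_cases hinv : V.map (diagMap d) ≤ V
    · have hs := eq_coordSubspace_of_invariant hd hinv
      have hc := finrank_coordSubspace (F := F) (coordSupport V)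
      rw [← hs] at hc ⊢
      congr 1
      omega
    · obtain ⟨u, hu⟩ := hV
      have hstep := hessStep_iff_eq hu hinv
      have hW := (hstep _).2 rfl
      have hlt := Submodule.finrank_lt_finrank_of_lt (left_lt_sup.2 hinv)
      have e : V ⊔ V.map (diagMap d) = V ⊔ Submodule.span F {u} :=
        Submodule.eq_of_le_of_finrank_le (sup_le le_sup_left hu) (by have := hW.2.1; omega)
      have hsupp : coordSupport (V ⊔ Submodule.span F {u}) = coordSupport V := by
        rw [← e, coordSupport_sup_map]
      rw [chainCount, Finset.filter_congr (fun W _ => hstep W), Finset.filter_eq' Finset.univ,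
        if_pos (Finset.mem_univ _), Finset.sum_singleton,
        ih (by have := hW.2.1; omega) (NearlyInvariant.sup_span hu), hsupp]

/-! ### Steps out of a coordinate subspace -/

theorem isCompl_coordSubspace (T : Finset (Fin n)) :
    IsCompl (coordSubspace F T) (coordSubspace F Tᶜ) := by
  constructor
  · rw [Submodule.disjoint_def]
    intro v h1 h2
    ext i
    by_cases hi : i ∈ T
    · exact h2 i (by simpa using hi)
    · exact h1 i hi
  · rw [codisjoint_iff, eq_top_iff]
    intro v _
    rw [Submodule.mem_sup]
    refine ⟨fun i => if i ∈ T then v i else 0, fun i hi => if_neg hi,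
      fun i => if i ∈ T then 0 else v i, fun i hi => if_pos (by simpa using hi), ?_⟩
    ext i
    by_cases hi : i ∈ T <;> simp [hi]

open Classical in
/-- The coordinates on which `v` is nonzero. -/
noncomputable def vecSupport (v : Fin n → F) : Finset (Fin n) := Finset.univ.filter fun j => v j ≠ 0

theorem mem_vecSupport {v : Fin n → F} {j : Fin n} : j ∈ vecSupport v ↔ v j ≠ 0 := by
  simp [vecSupport]

theorem mem_coordSubspace_iff_vecSupport {T : Finset (Fin n)} {v : Fin n → F} :
    v ∈ coordSubspace F T ↔ vecSupport v ⊆ T := by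
  constructor
  · intro h j hj
    by_contra hjT
    exact mem_vecSupport.1 hj (h j hjT)
  · intro h j hj
    by_contra hne
    exact hj (h (mem_vecSupport.2 hne))

theorem coordSupport_sup_span (T : Finset (Fin n)) (v : Fin n → F) :
    coordSupport (coordSubspace F T ⊔ Submodule.span F {v}) = T ∪ vecSupport v := by
  apply subset_antisymm
  · rw [coordSupport_subset_iff]
    refine sup_le ?_ ?_
    · intro w hw i hi
      exact hw i fun h => hi (Finset.mem_union_left _ h)
    · rw [Submodule.span_singleton_le_iff_mem, mem_coordSubspace_iff_vecSupport]
      exact Finset.subset_union_right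
  · intro j hj
    rw [mem_coordSupport]
    rcases Finset.mem_union.1 hj with h | h
    · exact ⟨Pi.single j 1, Submodule.mem_sup_left (single_mem_coordSubspace h 1), by simp⟩
    · exact ⟨v, Submodule.mem_sup_right (Submodule.mem_span_singleton_self v), mem_vecSupport.1 h⟩

theorem card_vecSupport_eq [Fintype F] [DecidableEq F] (U : Finset (Fin n)) :
    (Finset.univ.filter fun v : Fin n → F => vecSupport v = U).card =
      (Fintype.card F - 1) ^ U.card := by
  have : (Finset.univ.filter fun v : Fin n → F => vecSupport v = U) =
      Fintype.piFinset fun i => if i ∈ U then Finset.univ.erase (0 : F) else {0} := by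
    ext v
    simp only [Finset.mem_filter, Finset.mem_univ, true_and, Fintype.mem_piFinset, Finset.ext_iff,
      mem_vecSupport]
    refine forall_congr' fun i => ?_
    by_cases hi : i ∈ U <;> simp [hi]
  rw [this, Fintype.card_piFinset]
  simp only [apply_ite Finset.card, Finset.card_erase_of_mem (Finset.mem_univ _), Finset.card_univ,
    Finset.card_singleton]
  rw [Finset.prod_ite_mem, Finset.univ_inter, Finset.prod_const]

theorem sup_span_eq_iff {T : Finset (Fin n)} {W : Submodule F (Fin n → F)}
    (hTW : coordSubspace F T ≤ W)
    (hW : Module.finrank F W = Module.finrank F (coordSubspace F T) + 1) {v : Fin n → F}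
    (hv : v ∈ coordSubspace F Tᶜ) (hv0 : v ≠ 0) :
    coordSubspace F T ⊔ Submodule.span F {v} = W ↔ v ∈ W := by
  have hvT : v ∉ coordSubspace F T := fun h =>
    hv0 (Submodule.disjoint_def.1 (isCompl_coordSubspace T).disjoint v h hv)
  have hr := Submodule.finrank_sup_span_singleton hvT
  constructor
  · rintro rfl
    exact Submodule.mem_sup_right (Submodule.mem_span_singleton_self v)
  · intro h
    exact Submodule.eq_of_le_of_finrank_eq
      (sup_le hTW ((Submodule.span_singleton_le_iff_mem _ _).2 h)) (by omega)

/-- `W` is `E_T + ⟨v⟩` for exactly `q - 1` vectors `v` supported off `T`: the nonzero vectors of the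
line `W ∩ E_{Tᶜ}`. -/
theorem card_fibre [Fintype F] [DecidableEq F] {T : Finset (Fin n)} {W : Submodule F (Fin n → F)}
    (hTW : coordSubspace F T ≤ W)
    (hW : Module.finrank F W = Module.finrank F (coordSubspace F T) + 1) :
    Nat.card {v : Fin n → F // (v ∈ coordSubspace F Tᶜ ∧ v ≠ 0) ∧
      coordSubspace F T ⊔ Submodule.span F {v} = W} = Fintype.card F - 1 := by
  classical
  have hc := isCompl_coordSubspace (F := F) T
  have hmod : coordSubspace F T ⊔ (coordSubspace F Tᶜ ⊓ W) = W := by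
    rw [← sup_inf_assoc_of_le _ hTW, hc.sup_eq_top, top_inf_eq]
  have hdis : coordSubspace F T ⊓ (coordSubspace F Tᶜ ⊓ W) = ⊥ := by
    rw [← inf_assoc, hc.inf_eq_bot, bot_inf_eq]
  have hfr := Submodule.finrank_sup_add_finrank_inf_eq (coordSubspace F T)
    (coordSubspace F Tᶜ ⊓ W)
  rw [hmod, hdis, finrank_bot] at hfr
  have hone : Module.finrank F (coordSubspace F Tᶜ ⊓ W : Submodule F (Fin n → F)) = 1 := by omega
  have hcard := Module.card_eq_pow_finrank (K := F)
    (V := (coordSubspace F Tᶜ ⊓ W : Submodule F (Fin n → F)))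
  rw [hone, pow_one] at hcard
  rw [← hcard, Nat.card_eq_fintype_card, Fintype.card_subtype, Fintype.card_subtype,
    ← Finset.card_erase_of_mem (a := (0 : Fin n → F)) (by simp)]
  congr 1
  ext v
  simp only [Finset.mem_filter, Finset.mem_univ, true_and, Finset.mem_erase, Submodule.mem_inf]
  constructor
  · rintro ⟨⟨h1, h2⟩, h3⟩
    exact ⟨h2, h1, (sup_span_eq_iff hTW hW h1 h2).1 h3⟩
  · rintro ⟨h2, h1, h3⟩
    exact ⟨⟨h1, h2⟩, (sup_span_eq_iff hTW hW h1 h2).2 h3⟩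

theorem chainCount_recurrence [Fintype F] [DecidableEq F] {d : Fin n → F}
    (hd : Function.Injective d) (k : ℕ) (T : Finset (Fin n)) (hT : T.card + (k + 1) = n) :
    (Fintype.card F - 1) * chainCount (HessStep d) (k + 1) (coordSubspace F T) =
      ∑ U ∈ Tᶜ.powerset.erase ∅, (Fintype.card F - 1) ^ U.card *
        chainCount (HessStep d) (n - (T ∪ U).card) (coordSubspace F (T ∪ U)) := by
  classical
  have hinv := map_diagMap_coordSubspace_le d T
  have hfr := finrank_coordSubspace (F := F) T
  let vs : Finset (Fin n → F) := Finset.univ.filter fun v => v ∈ coordSubspace F Tᶜ ∧ v ≠ 0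
  have hvT : ∀ v ∈ vs, v ∉ coordSubspace F T := by
    intro v hv h
    obtain ⟨h1, h2⟩ := (Finset.mem_filter.1 hv).2
    exact h2 (Submodule.disjoint_def.1 (isCompl_coordSubspace T).disjoint v h h1)
  have hstep : ∀ v ∈ vs, HessStep d (coordSubspace F T)
      (coordSubspace F T ⊔ Submodule.span F {v}) := fun v hv =>
    ⟨le_sup_left, Submodule.finrank_sup_span_singleton (hvT v hv), hinv.trans le_sup_left⟩
  -- both sides count pairs of a nonzero vector `v` supported off `T` and a continuation of `E_T + ⟨v⟩`
  trans ∑ v ∈ vs, chainCount (HessStep d) k (coordSubspace F T ⊔ Submodule.span F {v})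
  · rw [chainCount, ← Finset.sum_fiberwise_of_maps_to' (s := vs)
      (t := Finset.univ.filter (fun W => HessStep d (coordSubspace F T) W))
      (g := fun v => coordSubspace F T ⊔ Submodule.span F {v})
      (fun v hv => Finset.mem_filter.2 ⟨Finset.mem_univ _, hstep v hv⟩)
      (fun W => chainCount (HessStep d) k W), Finset.mul_sum]
    refine Finset.sum_congr rfl fun W hW => ?_
    obtain ⟨hW1, hW2, -⟩ := (Finset.mem_filter.1 hW).2
    rw [Finset.sum_const, smul_eq_mul, ← card_fibre hW1 hW2, Nat.card_eq_fintype_card,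
      Fintype.card_subtype, Finset.filter_filter]
  · have hmaps : ∀ v ∈ vs, vecSupport v ∈ Tᶜ.powerset.erase ∅ := by
      intro v hv
      obtain ⟨h1, h2⟩ := (Finset.mem_filter.1 hv).2
      refine Finset.mem_erase.2 ⟨fun h => h2 ?_, Finset.mem_powerset.2
        (mem_coordSubspace_iff_vecSupport.1 h1)⟩
      ext i
      by_contra hi
      have := mem_vecSupport.2 hi
      simp [h] at this
    have hterm : ∀ v ∈ vs,
        chainCount (HessStep d) k (coordSubspace F T ⊔ Submodule.span F {v}) =
          chainCount (HessStep d) (n - (T ∪ vecSupport v).card)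
            (coordSubspace F (T ∪ vecSupport v)) := by
      intro v hv
      have h := chainCount_eq_coordSubspace hd k
        (V := coordSubspace F T ⊔ Submodule.span F {v})
        (by have := (hstep v hv).2.1; omega)
        (NearlyInvariant.sup_span (hinv.trans le_sup_left))
      rwa [coordSupport_sup_span] at h
    rw [Finset.sum_congr rfl hterm, ← Finset.sum_fiberwise_of_maps_to' hmaps
      (fun U => chainCount (HessStep d) (n - (T ∪ U).card) (coordSubspace F (T ∪ U)))]
    refine Finset.sum_congr rfl fun U hU => ?_
    obtain ⟨hU0, hU⟩ := Finset.mem_erase.1 hU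
    rw [Finset.sum_const, smul_eq_mul, ← card_vecSupport_eq, Finset.filter_filter]
    congr 2
    ext v
    simp only [Finset.mem_filter, Finset.mem_univ, true_and]
    refine ⟨fun h => h.2, fun h => ⟨⟨?_, ?_⟩, h⟩⟩
    · rw [mem_coordSubspace_iff_vecSupport, h]
      exact Finset.mem_powerset.1 hU
    · rintro rfl
      apply hU0
      rw [← h]
      ext i
      simp [mem_vecSupport]

theorem chainCount_eq_orderSum [Fintype F] [DecidableEq F] {d : Fin n → F}
    (hd : Function.Injective d) (k : ℕ) (T : Finset (Fin n)) (hT : T.card + k = n) :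
    chainCount (HessStep d) k (coordSubspace F T) = orderSum (Fintype.card F - 1) k Tᶜ 0 := by
  induction k using Nat.strong_induction_on generalizing T with
  | _ k ih =>
    cases k with
    | zero => rfl
    | succ k =>
      have hr : 0 < Fintype.card F - 1 := by
        have := Fintype.one_lt_card (α := F); omega
      apply Nat.eq_of_mul_eq_mul_left hr
      have hc : Tᶜ.card = k + 1 := by rw [Finset.card_compl, Fintype.card_fin]; omega
      rw [chainCount_recurrence hd k T hT, orderSum_recurrence _ _ _ hc]
      refine Finset.sum_congr rfl fun U hU => ?_
      obtain ⟨hU0, hU⟩ := Finset.mem_erase.1 hU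
      have hU := Finset.mem_powerset.1 hU
      have hpos := Finset.card_pos.2 (Finset.nonempty_iff_ne_empty.2 hU0)
      have hle := Finset.card_le_univ (T ∪ U)
      rw [Fintype.card_fin] at hle
      have hdis : Disjoint T U := by
        rw [Finset.disjoint_left]; intro x hx hx'
        exact Finset.mem_compl.1 (hU hx') hx
      have hcu := Finset.card_union_of_disjoint hdis
      have e : Tᶜ \ U = (T ∪ U)ᶜ := by
        ext x; simp
      rw [ih (n - (T ∪ U).card) (by omega) (T ∪ U) (by omega), e, Finset.card_compl,
        Fintype.card_fin]

end Flags

/-- Hessenberg flags are the chains of `n` Hessenberg steps from `⊥`: the dimension of each term, hence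
the last term being `⊤`, follows from the dimension growing by one in each step. -/
theorem hessFlagCount_eq_chainCount (F : Type) [Field F] [Fintype F] [DecidableEq F] (n : ℕ)
    (d : Fin n → F) : hessFlagCount F n d = chainCount (HessStep d) n ⊥ := by
  rw [← card_chains, hessFlagCount]
  refine Nat.card_congr (Equiv.subtypeEquivRight fun f => ?_)
  constructor
  · rintro ⟨h1, -, h3, h4, h5⟩
    refine ⟨h1, fun j => ⟨h3 (Fin.castSucc_lt_succ (i := j)).le, ?_, h5 j⟩⟩
    rw [h4, h4]
    simp
  · rintro ⟨h1, h2⟩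
    have hfr : ∀ i : Fin (n + 1), Module.finrank F (f i) = (i : ℕ) := by
      intro i
      induction i using Fin.induction with
      | zero => rw [h1]; simp
      | succ j ih => rw [(h2 j).2.1, ih]; simp
    refine ⟨h1, ?_, Fin.monotone_iff_le_succ.2 fun j => (h2 j).1, hfr, fun j => (h2 j).2.2⟩
    apply Submodule.eq_top_of_finrank_eq
    rw [hfr]
    simp

/-- Let `q > n` be a prime power and `M` an invertible diagonal `n × n` matrix over `𝔽_q`
with `n` distinct (nonzero) eigenvalues. The number of complete flags of `𝔽_q^n` with
`M Vⱼ ⊆ V_{j+1}` for all `j` equals `∑_{π ∈ Sₙ} q^{d(π)}`, the generating function for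
permutations by descents (the `𝔽_q`-point count of the Hessenberg variety `Hess(n,1)`). -/
theorem hessFlagCount_eq_descent_generating_function (F : Type) [Field F] [Fintype F]
    [DecidableEq F] (n q : ℕ) (hq : Fintype.card F = q) (hn : n < q)
    (d : Fin n → F) (hinj : Function.Injective d) (h0 : ∀ j, d j ≠ 0) :
    hessFlagCount F n d = ∑ π : Equiv.Perm (Fin n), q ^ descents π := by
  have hbot : (⊥ : Submodule F (Fin n → F)) = coordSubspace F ∅ := by
    refine le_antisymm bot_le (coordSubspace_le ?_)
    simp
  rw [hessFlagCount_eq_chainCount, hbot, chainCount_eq_orderSum hinj n ∅ (by simp),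
    Finset.compl_empty, orderSum_univ, hq, Nat.sub_add_cancel (by omega)]
end

section
/- Fix integers n and p with $1 \le p \le n-1$. Let q be a prime power with $q > n$, and let M be an invertible diagonal $n \times n$ matrix over $\mathbb{F}_q$ with n distinct eigenvalues. Then the number of complete flags $0 = V_0 \subset V_1 \subset \cdots \subset V_n = \mathbb{F}_q^n$ such that $M V_i \subseteq V_{i+p}$ for all i (with $V_j = \mathbb{F}_q^n$ for $j \ge n$) equals $\sum_{\pi \in S_n} q^{\,|\{(i,j) : 1 \le i < j \le n,\ j - i \le p,\ \pi(i) > \pi(j)\}|}$. -/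
/-!
The flag variety is cut into Schubert cells. Every complete flag has a unique basis in reduced
column echelon form: a permutation `w` of pivots and vectors `v k` with `v k (w j) = u j k`, where
`u` is unipotent and `u j i ≠ 0` with `i ≠ j` forces `(i, j)` to be an inversion of `w`
(`exists_cellSub_eq`, `cellSub_injective`).

In this basis the diagonal matrix becomes `u⁻¹ D u`, where `D` has diagonal `d ∘ w`, and the
Hessenberg condition says that the entries of `u⁻¹ D u` more than `p` steps below the diagonal
vanish (`cellSub_hess_iff`). Since inversions of `w` form a strict order, matrices supported on
them are closed under products, and `u⁻¹ D u` has diagonal `d ∘ w` and is again supported on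
inversions. As the entries of `D` are distinct, `u ↦ u⁻¹ D u` is a bijection onto all matrices of
this shape (`conj_bijective`). So the Hessenberg condition just sets some of the free coordinates
of `u⁻¹ D u` to zero, leaving one for each inversion `(i, j)` with `j - i ≤ p`; the cell of `w`
therefore contributes `q ^ m` flags, where `m` is the number of such inversions.
-/

/-- `hessFlagCountP F n p dg` is the number of complete flags
`0 = V₀ ⊂ V₁ ⊂ ⋯ ⊂ Vₙ = F^n` (with `dim Vᵢ = i`) such that `M Vᵢ ⊆ V_{i+p}` for all `i`
(with `Vⱼ = F^n` for `j ≥ n`), where `M` is the diagonal matrix with diagonal `dg`.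
This is the `F`-point count of the Hessenberg variety `Hess(n, p)`. -/
noncomputable def hessFlagCountP (F : Type) [Field F] [Fintype F] [DecidableEq F]
    (n p : ℕ) (dg : Fin n → F) : ℕ :=
  Nat.card {f : Fin (n + 1) → Submodule F (Fin n → F) //
    f 0 = ⊥ ∧ f (Fin.last n) = ⊤ ∧ Monotone f ∧
    (∀ i : Fin (n + 1), Module.finrank F (f i) = (i : ℕ)) ∧
    ∀ i : Fin (n + 1), (f i).map (Matrix.diagonal dg).mulVecLin ≤
      f ⟨min ((i : ℕ) + p) n, Nat.lt_succ_of_le (min_le_right _ _)⟩}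

/-! ### Matrices with prescribed diagonal and support -/

/-- The affine space of matrices with diagonal `e` whose off-diagonal entry in row `j` and
column `i` may be nonzero only if `R i j` holds. -/
def supportedMat {F : Type} [Field F] {n : ℕ} (R : Fin n → Fin n → Prop) (e : Fin n → F) :
    Set (Matrix (Fin n) (Fin n) F) :=
  {A | (∀ k, A k k = e k) ∧ ∀ i j, i ≠ j → ¬ R i j → A j i = 0}

theorem card_supportedMat {F : Type} [Field F] [Fintype F] {n : ℕ}
    (R : Fin n → Fin n → Prop) (hR : ∀ i, ¬ R i i) (e : Fin n → F) :
    Nat.card (supportedMat R e) =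
      Fintype.card F ^ Nat.card {ij : Fin n × Fin n // R ij.1 ij.2} := by
  classical
  let φ : supportedMat R e ≃ ({ij : Fin n × Fin n // R ij.1 ij.2} → F) :=
    { toFun := fun A ij => A.1 ij.1.2 ij.1.1
      invFun := fun g => ⟨fun j i => if h : R i j then g ⟨(i, j), h⟩ else if i = j then e i else 0,
        by intro k; simp [hR k], by intro i j hij h; simp [hij, h]⟩
      left_inv := by
        rintro ⟨A, hA1, hA2⟩
        ext j i
        by_cases h : R i j
        · simp [h]
        · by_cases hij : i = j
          · subst hij; simp [h, hA1]
          · simp [h, hij, hA2 i j hij h]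
      right_inv := by
        intro g
        ext ⟨⟨i, j⟩, h⟩
        have h' : R i j := h
        simp [h'] }
  rw [Nat.card_congr φ, Nat.card_fun, Nat.card_eq_fintype_card]

section Order

variable {F : Type} [Field F] {n : ℕ} {R : Fin n → Fin n → Prop}

/-- For a strict order `R` the supported matrices with arbitrary diagonal form an incidence
algebra, on which taking the diagonal is multiplicative. -/
theorem supportedMat_mul (hlt : ∀ i j, R i j → i < j) (htr : ∀ i j k, R i j → R j k → R i k)
    {a b : Fin n → F} {A B : Matrix (Fin n) (Fin n) F}
    (hA : A ∈ supportedMat R a) (hB : B ∈ supportedMat R b) :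
    A * B ∈ supportedMat R (a * b) := by
  refine ⟨fun k => ?_, fun i j hij h => ?_⟩
  · rw [Matrix.mul_apply, Finset.sum_eq_single k]
    · simp [hA.1, hB.1]
    · intro l _ hl
      by_cases h1 : R l k
      · rw [hB.2 k l hl.symm (fun h2 => absurd (hlt _ _ h1) (hlt _ _ h2).asymm), mul_zero]
      · rw [hA.2 l k hl h1, zero_mul]
    · simp
  · rw [Matrix.mul_apply]
    refine Finset.sum_eq_zero fun l _ => ?_
    by_cases hl : l = j
    · subst hl; rw [hB.2 i l hij h, mul_zero]
    by_cases hi : i = l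
    · subst hi; rw [hA.2 i j hl h, zero_mul]
    by_cases h1 : R l j
    · rw [hB.2 i l hi (fun h2 => h (htr _ _ _ h2 h1)), mul_zero]
    · rw [hA.2 l j hl h1, zero_mul]

theorem supportedMat_isUnit (hlt : ∀ i j, R i j → i < j) {u : Matrix (Fin n) (Fin n) F}
    (hu : u ∈ supportedMat R 1) : IsUnit u.det := by
  have h : u.IsLowerTriangular := by
    intro i j hij
    have hij' : i < j := hij
    exact hu.2 j i hij'.ne' (fun h => absurd (hlt _ _ h) hij'.asymm)
  rw [Matrix.det_of_isLowerTriangular u h]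
  simp [hu.1]

theorem one_mem_supportedMat : (1 : Matrix (Fin n) (Fin n) F) ∈ supportedMat R 1 :=
  ⟨fun k => by simp, fun i j hij _ => Matrix.one_apply_ne hij.symm⟩

/-- Over a finite field a unipotent supported matrix has finite multiplicative order, so its
inverse is one of its powers and has the same shape. -/
theorem supportedMat_inv [Fintype F] (hlt : ∀ i j, R i j → i < j)
    (htr : ∀ i j k, R i j → R j k → R i k) {u : Matrix (Fin n) (Fin n) F}
    (hu : u ∈ supportedMat R 1) : u⁻¹ ∈ supportedMat R 1 := by
  have hpow : ∀ m : ℕ, u ^ m ∈ supportedMat R (1 : Fin n → F) := by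
    intro m
    induction m with
    | zero => simpa using one_mem_supportedMat
    | succ m ih => simpa [pow_succ] using supportedMat_mul hlt htr ih hu
  obtain ⟨U, rfl⟩ := (Matrix.isUnit_iff_isUnit_det u).2 (supportedMat_isUnit hlt hu)
  obtain ⟨m, hm, h⟩ := isOfFinOrder_iff_pow_eq_one.1 (isOfFinOrder_of_finite U)
  have : (U : Matrix (Fin n) (Fin n) F) * (U : Matrix (Fin n) (Fin n) F) ^ (m - 1) = 1 := by
    rw [← pow_succ', Nat.sub_add_cancel hm, ← Units.val_pow_eq_pow_val, h, Units.val_one]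
  rw [Matrix.inv_eq_right_inv this]
  exact hpow _

theorem conj_mem_supportedMat [Fintype F] (hlt : ∀ i j, R i j → i < j)
    (htr : ∀ i j k, R i j → R j k → R i k) (e : Fin n → F) {u : Matrix (Fin n) (Fin n) F}
    (hu : u ∈ supportedMat R 1) : u⁻¹ * Matrix.diagonal e * u ∈ supportedMat R e := by
  have hD : Matrix.diagonal e ∈ supportedMat R e :=
    ⟨fun k => by simp, fun i j hij _ => Matrix.diagonal_apply_ne _ hij.symm⟩
  simpa using supportedMat_mul hlt htr
    (supportedMat_mul hlt htr (supportedMat_inv hlt htr hu) hD) hu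

/-- Conjugation `u ↦ u⁻¹ D u` of a diagonal matrix `D` with distinct entries is a bijection from
the unipotent supported matrices onto the supported matrices with the diagonal of `D`: two
elements with the same image differ by an element of the centralizer of `D`, which consists of
diagonal matrices, and both sides have the same finite cardinality. -/
theorem conj_bijective [Fintype F] (hlt : ∀ i j, R i j → i < j)
    (htr : ∀ i j k, R i j → R j k → R i k) (e : Fin n → F) (he : Function.Injective e) :
    Function.Bijective (fun u : supportedMat R (1 : Fin n → F) =>
      (⟨u.1⁻¹ * Matrix.diagonal e * u.1, conj_mem_supportedMat hlt htr e u.2⟩ :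
        supportedMat R e)) := by
  have hirr : ∀ i, ¬ R i i := fun i h => lt_irrefl _ (hlt _ _ h)
  refine Function.Injective.bijective_of_nat_card_le ?_ ?_
  · rintro ⟨u, hu⟩ ⟨v, hv⟩ huv
    have huv' : u⁻¹ * Matrix.diagonal e * u = v⁻¹ * Matrix.diagonal e * v := congrArg Subtype.val huv
    have hu1 := supportedMat_isUnit hlt hu
    have hv1 := supportedMat_isUnit hlt hv
    have hs : u * v⁻¹ ∈ supportedMat R (1 : Fin n → F) := by
      simpa using supportedMat_mul hlt htr hu (supportedMat_inv hlt htr hv)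
    have hcomm : Matrix.diagonal e * (u * v⁻¹) = (u * v⁻¹) * Matrix.diagonal e := by
      calc Matrix.diagonal e * (u * v⁻¹)
          = (u * u⁻¹) * Matrix.diagonal e * (u * v⁻¹) := by rw [Matrix.mul_nonsing_inv u hu1, one_mul]
        _ = u * (u⁻¹ * Matrix.diagonal e * u) * v⁻¹ := by simp only [mul_assoc]
        _ = u * (v⁻¹ * Matrix.diagonal e * v) * v⁻¹ := by rw [huv']
        _ = (u * v⁻¹) * Matrix.diagonal e * (v * v⁻¹) := by simp only [mul_assoc]
        _ = _ := by rw [Matrix.mul_nonsing_inv v hv1, mul_one]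
    have hone : u * v⁻¹ = 1 := by
      ext i j
      by_cases hij : i = j
      · subst hij; simpa using hs.1 i
      · have h := congrFun (congrFun hcomm i) j
        rw [Matrix.diagonal_mul, Matrix.mul_diagonal, mul_comm] at h
        rw [Matrix.one_apply_ne hij]
        by_contra h0
        exact hij (he (mul_left_cancel₀ h0 h))
    apply Subtype.ext
    calc u = u * (v⁻¹ * v) := by rw [Matrix.nonsing_inv_mul v hv1, mul_one]
      _ = (u * v⁻¹) * v := by rw [mul_assoc]
      _ = v := by rw [hone, one_mul]
  · rw [card_supportedMat R hirr, card_supportedMat R hirr]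

theorem card_conj_mem [Fintype F] {R' : Fin n → Fin n → Prop} (hlt : ∀ i j, R i j → i < j)
    (htr : ∀ i j k, R i j → R j k → R i k) (hR' : ∀ i j, R' i j → R i j)
    (e : Fin n → F) (he : Function.Injective e) :
    Nat.card {u : Matrix (Fin n) (Fin n) F //
        u ∈ supportedMat R 1 ∧ u⁻¹ * Matrix.diagonal e * u ∈ supportedMat R' e} =
      Fintype.card F ^ Nat.card {ij : Fin n × Fin n // R' ij.1 ij.2} := by
  rw [← card_supportedMat R' (fun i h => lt_irrefl _ (hlt _ _ (hR' _ _ h))) e]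
  refine Nat.card_eq_of_bijective
    (fun u => ⟨u.1⁻¹ * Matrix.diagonal e * u.1, u.2.2⟩) ⟨?_, ?_⟩
  · rintro ⟨u, hu, hu'⟩ ⟨v, hv, hv'⟩ h
    have h' := congrArg Subtype.val h
    have := @(conj_bijective hlt htr e he).1 ⟨u, hu⟩ ⟨v, hv⟩ (Subtype.ext h')
    have huv : u = v := congrArg Subtype.val this
    exact Subtype.ext huv
  · rintro ⟨C, hC⟩
    obtain ⟨u, hu⟩ := (conj_bijective hlt htr e he).2
      ⟨C, hC.1, fun i j hij h => hC.2 i j hij (fun h' => h (hR' _ _ h'))⟩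
    have hu' : u.1⁻¹ * Matrix.diagonal e * u.1 = C := congrArg Subtype.val hu
    exact ⟨⟨u.1, u.2, hu' ▸ hC⟩, Subtype.ext hu'⟩

end Order

/-! ### Schubert cells -/

section Cells

variable {F : Type} [Field F] {n : ℕ}

/-- `i` and `j` form an inversion of `w`. -/
def IsInv (w : Equiv.Perm (Fin n)) (i j : Fin n) : Prop := i < j ∧ w j < w i

theorem IsInv.lt (w : Equiv.Perm (Fin n)) (i j : Fin n) (h : IsInv w i j) : i < j := h.1

theorem IsInv.trans' (w : Equiv.Perm (Fin n)) (i j k : Fin n) (h : IsInv w i j)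
    (h' : IsInv w j k) : IsInv w i k := ⟨h.1.trans h'.1, h'.2.trans h.2⟩

/-- The standard coordinate subspace spanned by the first `i` basis vectors. -/
def coordSub (F : Type) [Field F] (n i : ℕ) : Submodule F (Fin n → F) :=
  ⨅ k ∈ {k : Fin n | i ≤ (k : ℕ)}, LinearMap.ker (LinearMap.proj k : (Fin n → F) →ₗ[F] F)

theorem mem_coordSub {i : ℕ} {x : Fin n → F} :
    x ∈ coordSub F n i ↔ ∀ k : Fin n, i ≤ (k : ℕ) → x k = 0 := by
  simp [coordSub]

theorem finrank_coordSub {i : ℕ} (hi : i ≤ n) : Module.finrank F (coordSub F n i) = i := by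
  have hd : Disjoint {k : Fin n | (k : ℕ) < i} {k : Fin n | i ≤ (k : ℕ)} := by
    rw [Set.disjoint_left]
    intro k h h'
    have h1 : (k : ℕ) < i := h
    have h2 : i ≤ (k : ℕ) := h'
    omega
  have hu : Set.univ ⊆ {k : Fin n | (k : ℕ) < i} ∪ {k : Fin n | i ≤ (k : ℕ)} :=
    fun k _ => lt_or_ge (k : ℕ) i
  have := (LinearMap.iInfKerProjEquiv F (fun _ : Fin n => F) hd hu).finrank_eq
  rw [coordSub, this, Module.finrank_fintype_fun_eq_card]
  have e : {k : Fin n | (k : ℕ) < i} ≃ Fin i :=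
    { toFun := fun k => ⟨k.1, k.2⟩
      invFun := fun k => ⟨⟨k, k.2.trans_le hi⟩, k.2⟩
      left_inv := fun _ => rfl
      right_inv := fun _ => rfl }
  simpa using Fintype.card_congr e

/-- The `i`-th member of the flag attached to a permutation `w` and a unipotent matrix `u`: the
span of the vectors `v k`, `k < i`, where `v k (w j) = u j k`. It is encoded as the set of vectors
whose coordinates with respect to the basis `v` vanish from position `i` on. -/
noncomputable def cellSub (w : Equiv.Perm (Fin n)) (u : Matrix (Fin n) (Fin n) F) (i : ℕ) :
    Submodule F (Fin n → F) :=
  (coordSub F n i).comap (u⁻¹.mulVecLin ∘ₗ LinearMap.funLeft F F w)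

theorem mem_cellSub {w : Equiv.Perm (Fin n)} {u : Matrix (Fin n) (Fin n) F} {i : ℕ}
    {x : Fin n → F} :
    x ∈ cellSub w u i ↔ ∀ k : Fin n, i ≤ (k : ℕ) → (u⁻¹.mulVec (x ∘ w)) k = 0 := by
  rw [cellSub, Submodule.mem_comap, mem_coordSub]
  rfl

theorem finrank_cellSub (w : Equiv.Perm (Fin n)) {u : Matrix (Fin n) (Fin n) F}
    (hu : IsUnit u.det) {i : ℕ} (hi : i ≤ n) : Module.finrank F (cellSub w u i) = i := by
  have hinv : Invertible u⁻¹ := Matrix.invertibleOfIsUnitDet _ (Matrix.isUnit_nonsing_inv_det u hu)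
  let L : (Fin n → F) ≃ₗ[F] (Fin n → F) :=
    (LinearEquiv.funCongrLeft F F w).trans (Matrix.toLinearEquiv' u⁻¹ hinv)
  have h : cellSub w u i = (coordSub F n i).comap (L : (Fin n → F) →ₗ[F] (Fin n → F)) := rfl
  rw [h, (L.ofSubmodule' (coordSub F n i)).finrank_eq, finrank_coordSub hi]

theorem cellSub_zero (w : Equiv.Perm (Fin n)) {u : Matrix (Fin n) (Fin n) F}
    (hu : IsUnit u.det) : cellSub w u 0 = ⊥ :=
  Submodule.finrank_eq_zero.1 (finrank_cellSub w hu n.zero_le)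

theorem cellSub_top (w : Equiv.Perm (Fin n)) (u : Matrix (Fin n) (Fin n) F) :
    cellSub w u n = ⊤ := by
  rw [eq_top_iff]
  intro x _
  exact mem_cellSub.2 fun k hk => absurd k.2 (not_lt.2 hk)

theorem cellSub_mono (w : Equiv.Perm (Fin n)) (u : Matrix (Fin n) (Fin n) F) {i j : ℕ}
    (h : i ≤ j) : cellSub w u i ≤ cellSub w u j :=
  fun _ hx => mem_cellSub.2 fun k hk => mem_cellSub.1 hx k (h.trans hk)

/-- In the basis attached to `(w, u)` the diagonal map becomes `u⁻¹ D u`, so the Hessenberg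
condition says that its entries more than `p` steps below the diagonal vanish. -/
theorem cellSub_hess_iff (w : Equiv.Perm (Fin n)) {u : Matrix (Fin n) (Fin n) F}
    (hu : IsUnit u.det) (d : Fin n → F) (p : ℕ) :
    (∀ i : Fin (n + 1), (cellSub w u i).map (Matrix.diagonal d).mulVecLin ≤
      cellSub w u (min ((i : ℕ) + p) n)) ↔
    ∀ k l : Fin n, (k : ℕ) + p < l → (u⁻¹ * Matrix.diagonal (d ∘ w) * u) l k = 0 := by
  have key : ∀ x : Fin n → F, u⁻¹.mulVec ((Matrix.diagonal d).mulVec x ∘ w) =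
      (u⁻¹ * Matrix.diagonal (d ∘ w) * u).mulVec (u⁻¹.mulVec (x ∘ w)) := by
    intro x
    have h : (Matrix.diagonal d).mulVec x ∘ w = (Matrix.diagonal (d ∘ w)).mulVec (x ∘ w) := by
      ext k; simp [Matrix.mulVec_diagonal]
    rw [h, Matrix.mulVec_mulVec, Matrix.mulVec_mulVec, mul_assoc _ u, Matrix.mul_nonsing_inv u hu,
      mul_one]
  constructor
  · intro H k l hkl
    -- test the condition at `i = k + 1` on the `k`-th basis vector
    let x : Fin n → F := (u.mulVec (Pi.single k 1)) ∘ w.symm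
    have hx : u⁻¹.mulVec (x ∘ w) = Pi.single k 1 := by
      have : x ∘ w = u.mulVec (Pi.single k 1) := by ext j; simp [x]
      rw [this, Matrix.mulVec_mulVec, Matrix.nonsing_inv_mul u hu, Matrix.one_mulVec]
    have hmem : x ∈ cellSub w u ((k.succ : Fin (n + 1)) : ℕ) := by
      rw [mem_cellSub, hx]
      intro m hm
      have : m ≠ k := by
        rintro rfl
        simp at hm
      simp [this]
    have h := mem_cellSub.1 (H k.succ (Submodule.mem_map_of_mem hmem)) l
      (by simp only [Fin.val_succ]; omega)
    rw [Matrix.mulVecLin_apply, key, hx] at h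
    simpa using h
  · rintro H i _ ⟨x, hx, rfl⟩
    rw [mem_cellSub]
    intro l hl
    rw [Matrix.mulVecLin_apply, key, Matrix.mulVec, dotProduct]
    refine Finset.sum_eq_zero fun k _ => ?_
    by_cases hk : (i : ℕ) ≤ k
    · rw [mem_cellSub.1 hx k hk, mul_zero]
    · rw [H k l (by have := l.2; omega), zero_mul]

/-- The `k`-th basis vector of the flag attached to `(w, u)` lies in its `(k+1)`-st member. -/
theorem col_mem_cellSub (w : Equiv.Perm (Fin n)) {u : Matrix (Fin n) (Fin n) F}
    (hu : IsUnit u.det) (k : Fin n) :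
    (fun a => u (w.symm a) k) ∈ cellSub w u ((k : ℕ) + 1) := by
  have h : (fun a => u (w.symm a) k) ∘ w = u.mulVec (Pi.single k 1) := by
    ext j; simp
  rw [mem_cellSub, h, Matrix.mulVec_mulVec, Matrix.nonsing_inv_mul u hu, Matrix.one_mulVec]
  intro m hm
  have : m ≠ k := by
    rintro rfl
    omega
  simp [this]

/-- A vector of the `(k+1)`-st member of the flag whose coordinates at `w j`, `j < k`, vanish is a
multiple of the `k`-th basis vector. -/
theorem eq_smul_of_mem_cellSub [Fintype F] (w : Equiv.Perm (Fin n))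
    {u : Matrix (Fin n) (Fin n) F} (hu : u ∈ supportedMat (IsInv w) 1) (k : Fin n)
    {x : Fin n → F} (hx : x ∈ cellSub w u ((k : ℕ) + 1)) (hx0 : ∀ j, j < k → x (w j) = 0) :
    ∃ c : F, ∀ j, x (w j) = u j k * c := by
  have hdet := supportedMat_isUnit (IsInv.lt w) hu
  have hinv := supportedMat_inv (IsInv.lt w) (IsInv.trans' w) hu
  set y := u⁻¹.mulVec (x ∘ w) with hy
  have hxy : x ∘ w = u.mulVec y := by
    rw [hy, Matrix.mulVec_mulVec, Matrix.mul_nonsing_inv u hdet, Matrix.one_mulVec]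
  have hy0 : ∀ j, j ≠ k → y j = 0 := by
    intro j hj
    rcases lt_or_gt_of_ne hj with h | h
    · rw [hy, Matrix.mulVec, dotProduct]
      refine Finset.sum_eq_zero fun l _ => ?_
      by_cases hl : l < k
      · rw [Function.comp_apply, hx0 l hl, mul_zero]
      · have hjl : j < l := h.trans_le (not_lt.1 hl)
        rw [hinv.2 l j hjl.ne' (fun h' => absurd h'.1 hjl.asymm), zero_mul]
    · exact mem_cellSub.1 hx j h
  refine ⟨y k, fun j => ?_⟩
  have h := congrFun hxy j
  rw [Function.comp_apply, Matrix.mulVec, dotProduct, Finset.sum_eq_single k] at h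
  · exact h
  · intro l _ hl
    rw [hy0 l hl, mul_zero]
  · simp

theorem cellSub_injective [Fintype F] {w w' : Equiv.Perm (Fin n)}
    {u u' : Matrix (Fin n) (Fin n) F} (hu : u ∈ supportedMat (IsInv w) 1)
    (hu' : u' ∈ supportedMat (IsInv w') 1) (h : ∀ i ≤ n, cellSub w u i = cellSub w' u' i) :
    w = w' ∧ u = u' := by
  have hdet' := supportedMat_isUnit (IsInv.lt w') hu'
  have main : ∀ m : ℕ, ∀ k : Fin n, (k : ℕ) = m →
      w k = w' k ∧ ∀ a, u (w.symm a) k = u' (w'.symm a) k := by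
    intro m
    induction m using Nat.strong_induction_on with
    | _ m ih =>
    rintro k rfl
    have hmem := col_mem_cellSub w' hdet' k
    rw [← h _ k.2] at hmem
    obtain ⟨c, hc⟩ := eq_smul_of_mem_cellSub w hu k hmem (by
      intro j hj
      have hww := (ih j hj j rfl).1
      simp only [hww, Equiv.symm_apply_apply]
      exact hu'.2 k j hj.ne' (fun h' => absurd h'.1 hj.asymm))
    have hc' : ∀ a, u' (w'.symm a) k = u (w.symm a) k * c := by
      intro a
      simpa using hc (w.symm a)
    have h1 : (1 : F) = u (w.symm (w' k)) k * c := by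
      have := hc' (w' k)
      rwa [Equiv.symm_apply_apply, hu'.1, Pi.one_apply] at this
    have h2 : u' (w'.symm (w k)) k = c := by
      have := hc' (w k)
      rwa [Equiv.symm_apply_apply, hu.1, Pi.one_apply, one_mul] at this
    have hc0 : c ≠ 0 := by
      rintro rfl
      simp at h1
    -- the two proportional vectors have the same last nonzero coordinate
    have hww : w k = w' k := by
      by_contra hne
      have e1 : w' k < w k := by
        by_contra hlt
        refine one_ne_zero (α := F) ?_
        rw [h1, hu.2 k (w.symm (w' k)) (fun e => hne ?_) (fun h' => hlt ?_), zero_mul]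
        · exact (Equiv.eq_symm_apply w).1 e
        · simpa using h'.2
      have e2 : w k < w' k := by
        by_contra hlt
        refine hc0 ?_
        rw [← h2, hu'.2 k (w'.symm (w k)) (fun e => hne ?_) (fun h' => hlt ?_)]
        · exact ((Equiv.eq_symm_apply w').1 e).symm
        · simpa using h'.2
      exact e1.asymm e2
    have hc1 : c = 1 := by
      rw [← h2, hww, Equiv.symm_apply_apply, hu'.1, Pi.one_apply]
    exact ⟨hww, fun a => by rw [hc' a, hc1, mul_one]⟩
  have hw : w = w' := Equiv.ext fun k => (main k k rfl).1
  subst hw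
  refine ⟨rfl, ?_⟩
  ext j k
  simpa using (main k k rfl).2 (w j)

/-- Reduced column echelon form of a complete flag. The vector `v k` is a nonzero element of
`f (k+1)` vanishing at the `k` pivots found before, which exists by counting dimensions, scaled to
have its last nonzero coordinate, the new pivot `w k`, equal to `1`. -/
theorem exists_echelon (f : ℕ → Submodule F (Fin n → F))
    (hdim : ∀ i ≤ n, Module.finrank F (f i) = i) :
    ∃ (w : Fin n → Fin n) (v : Fin n → Fin n → F), ∀ k : Fin n,
      v k ∈ f (k + 1) ∧ v k (w k) = 1 ∧ (∀ b, w k < b → v k b = 0) ∧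
      ∀ j, j < k → v k (w j) = 0 := by
  classical
  have main : ∀ m ≤ n, ∃ (w : Fin n → Fin n) (v : Fin n → Fin n → F), ∀ k : Fin n, (k : ℕ) < m →
      v k ∈ f (k + 1) ∧ v k (w k) = 1 ∧ (∀ b, w k < b → v k b = 0) ∧
      ∀ j, j < k → v k (w j) = 0 := by
    intro m
    induction m with
    | zero => exact fun _ => ⟨id, fun _ => 0, fun k hk => absurd hk (Nat.not_lt_zero _)⟩
    | succ m ih =>
      intro hm
      obtain ⟨w, v, h⟩ := ih (by omega)
      let L : f (m + 1) →ₗ[F] (Fin m → F) :=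
        (LinearMap.funLeft F F fun j : Fin m => w (Fin.castLE (by omega) j)) ∘ₗ (f (m + 1)).subtype
      have hL : LinearMap.ker L ≠ ⊥ := by
        apply LinearMap.ker_ne_bot_of_finrank_lt
        rw [hdim _ hm]
        simp
      obtain ⟨⟨x, hxf⟩, hxL, hx0⟩ := Submodule.exists_mem_ne_zero_of_ne_bot hL
      have hxw : ∀ j : Fin n, (j : ℕ) < m → x (w j) = 0 := by
        intro j hj
        exact congrFun (LinearMap.mem_ker.1 hxL) ⟨j, hj⟩
      have hxne : x ≠ 0 := fun e => hx0 (Subtype.ext e)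
      have hne : (Finset.univ.filter fun b => x b ≠ 0).Nonempty := by
        obtain ⟨b, hb⟩ := Function.ne_iff.1 hxne
        exact ⟨b, by simpa using hb⟩
      set b := (Finset.univ.filter fun b => x b ≠ 0).max' hne with hb
      have hxb : x b ≠ 0 := by
        simpa using (Finset.mem_filter.1 (Finset.max'_mem _ hne)).2
      have hxgt : ∀ a, b < a → x a = 0 := by
        intro a ha
        by_contra hxa
        exact absurd (Finset.le_max' (Finset.univ.filter fun b => x b ≠ 0) a (by simpa using hxa))
          (not_le.2 ha)
      let M : Fin n := ⟨m, hm⟩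
      refine ⟨Function.update w M b, Function.update v M ((x b)⁻¹ • x), fun k hk => ?_⟩
      rcases Nat.lt_succ_iff_lt_or_eq.1 hk with hk | hk
      · have hkM : k ≠ M := fun e => by simp [e, M] at hk
        obtain ⟨h1, h2, h3, h4⟩ := h k hk
        rw [Function.update_of_ne hkM, Function.update_of_ne hkM]
        refine ⟨h1, h2, h3, fun j hj => ?_⟩
        have hjM : j ≠ M := fun e => by
          have : (j : ℕ) < k := hj
          simp [e, M] at this
          omega
        rw [Function.update_of_ne hjM]
        exact h4 j hj
      · have hkM : k = M := Fin.ext hk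
        subst hkM
        rw [Function.update_self, Function.update_self]
        refine ⟨Submodule.smul_mem _ _ hxf, by simp [hxb], fun a ha => by simp [hxgt a ha],
          fun j hj => ?_⟩
        rw [Function.update_of_ne hj.ne]
        simp [hxw j hj]
  obtain ⟨w, v, h⟩ := main n le_rfl
  exact ⟨w, v, fun k => h k k.2⟩

theorem exists_cellSub_eq (f : ℕ → Submodule F (Fin n → F))
    (hmono : ∀ i j, i ≤ j → j ≤ n → f i ≤ f j) (hdim : ∀ i ≤ n, Module.finrank F (f i) = i) :
    ∃ (w : Equiv.Perm (Fin n)) (u : Matrix (Fin n) (Fin n) F),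
      u ∈ supportedMat (IsInv w) 1 ∧ ∀ i ≤ n, cellSub w u i = f i := by
  obtain ⟨w₀, v, h⟩ := exists_echelon f hdim
  have hinj : Function.Injective w₀ := by
    have aux : ∀ j k, j < k → w₀ j ≠ w₀ k := by
      intro j k hjk e
      have h1 := (h k).2.2.2 j hjk
      rw [e, (h k).2.1] at h1
      exact one_ne_zero h1
    intro j k e
    by_contra hne
    rcases lt_or_gt_of_ne hne with h' | h'
    · exact aux j k h' e
    · exact aux k j h' e.symm
  let w : Equiv.Perm (Fin n) := Equiv.ofBijective w₀ (Finite.injective_iff_bijective.1 hinj)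
  let u : Matrix (Fin n) (Fin n) F := fun j k => v k (w j)
  have hu : u ∈ supportedMat (IsInv w) 1 := by
    refine ⟨fun k => (h k).2.1, fun i j hij hR => ?_⟩
    rcases lt_or_gt_of_ne hij with h' | h'
    · refine (h i).2.2.1 _ (lt_of_le_of_ne (not_lt.1 fun h'' => hR ⟨h', h''⟩) ?_)
      exact fun e => hij (hinj e)
    · exact (h i).2.2.2 j h'
  have hdet := supportedMat_isUnit (IsInv.lt w) hu
  refine ⟨w, u, hu, fun i hi => ?_⟩
  refine Submodule.eq_of_le_of_finrank_eq ?_ (by rw [finrank_cellSub w hdet hi, hdim i hi])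
  intro x hx
  set y := u⁻¹.mulVec (x ∘ w) with hy
  have hxy : x ∘ w = u.mulVec y := by
    rw [hy, Matrix.mulVec_mulVec, Matrix.mul_nonsing_inv u hdet, Matrix.one_mulVec]
  have hsum : x = ∑ k, y k • v k := by
    ext a
    have := congrFun hxy (w.symm a)
    rw [Function.comp_apply, Equiv.apply_symm_apply, Matrix.mulVec, dotProduct] at this
    rw [this, Finset.sum_apply]
    exact Finset.sum_congr rfl fun k _ => by simp [u, mul_comm]
  rw [hsum]
  refine Submodule.sum_mem _ fun k _ => ?_
  by_cases hk : i ≤ (k : ℕ)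
  · have hyk : y k = 0 := mem_cellSub.1 hx k hk
    rw [hyk, zero_smul]
    exact Submodule.zero_mem _
  · exact Submodule.smul_mem _ _ (hmono _ _ (by omega) hi (h k).1)

end Cells

/-- Fix `1 ≤ p ≤ n - 1`. Let `q > n` be a prime power and `M` an invertible diagonal
`n × n` matrix over `𝔽_q` with `n` distinct (nonzero) eigenvalues. The number of complete
flags of `𝔽_q^n` with `M Vᵢ ⊆ V_{i+p}` for all `i` equals
`∑_{π ∈ Sₙ} q^{#{(i,j) : i < j, j - i ≤ p, π(i) > π(j)}}`. -/
theorem hessFlagCountP_eq_statistic_generating_function (F : Type) [Field F] [Fintype F]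
    [DecidableEq F] (n p q : ℕ) (hp1 : 1 ≤ p) (hpn : p ≤ n - 1)
    (hq : Fintype.card F = q) (hn : n < q)
    (d : Fin n → F) (hinj : Function.Injective d) (h0 : ∀ j, d j ≠ 0) :
    hessFlagCountP F n p d =
      ∑ π : Equiv.Perm (Fin n),
        q ^ (Finset.univ.filter fun ij : Fin n × Fin n =>
              ij.1 < ij.2 ∧ (ij.2 : ℕ) - (ij.1 : ℕ) ≤ p ∧ π ij.2 < π ij.1).card := by
  classical
  subst hq
  let R' : Equiv.Perm (Fin n) → Fin n → Fin n → Prop := fun w i j =>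
    i < j ∧ (j : ℕ) - (i : ℕ) ≤ p ∧ w j < w i
  have hR' : ∀ w i j, R' w i j → IsInv w i j := fun w i j h => ⟨h.1, h.2.2⟩
  let X : Equiv.Perm (Fin n) → Type := fun w => {u : Matrix (Fin n) (Fin n) F //
    u ∈ supportedMat (IsInv w) 1 ∧
      u⁻¹ * Matrix.diagonal (d ∘ w) * u ∈ supportedMat (R' w) (d ∘ w)}
  have hcard : ∀ w, Nat.card (X w) = Fintype.card F ^ (Finset.univ.filter
      fun ij : Fin n × Fin n =>
        ij.1 < ij.2 ∧ (ij.2 : ℕ) - (ij.1 : ℕ) ≤ p ∧ w ij.2 < w ij.1).card := by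
    intro w
    have h := card_conj_mem (IsInv.lt w) (IsInv.trans' w) (hR' w) (d ∘ w)
      (hinj.comp w.injective)
    refine h.trans ?_
    rw [Nat.card_eq_fintype_card, Fintype.card_subtype]
  -- inside a cell, the Hessenberg condition amounts to `u⁻¹ D u` having support in `R'`
  have hiff : ∀ w (u : Matrix (Fin n) (Fin n) F), u ∈ supportedMat (IsInv w) 1 →
      ((∀ i : Fin (n + 1), (cellSub w u i).map (Matrix.diagonal d).mulVecLin ≤
        cellSub w u (min ((i : ℕ) + p) n)) ↔
      u⁻¹ * Matrix.diagonal (d ∘ w) * u ∈ supportedMat (R' w) (d ∘ w)) := by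
    intro w u hu
    have hC := conj_mem_supportedMat (IsInv.lt w) (IsInv.trans' w) (d ∘ w) hu
    rw [cellSub_hess_iff w (supportedMat_isUnit (IsInv.lt w) hu)]
    constructor
    · refine fun H => ⟨hC.1, fun i j hij h => ?_⟩
      by_cases h' : IsInv w i j
      · refine H i j ?_
        by_contra hlt
        exact h ⟨h'.1, by omega, h'.2⟩
      · exact hC.2 i j hij h'
    · intro H k l hkl
      refine H.2 k l (fun e => ?_) (fun h => ?_)
      · subst e; omega
      · have := h.2.1
        omega
  rw [← Finset.sum_congr rfl fun w _ => hcard w, ← Nat.card_sigma, hessFlagCountP]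
  symm
  refine Nat.card_eq_of_bijective (fun a : Σ w, X w =>
    ⟨fun i => cellSub a.1 a.2.1 i, cellSub_zero a.1 (supportedMat_isUnit (IsInv.lt a.1) a.2.2.1),
      cellSub_top _ _, fun i j hij => cellSub_mono _ _ hij,
      fun i => finrank_cellSub a.1 (supportedMat_isUnit (IsInv.lt a.1) a.2.2.1)
        (Nat.lt_succ_iff.1 i.2),
      (hiff a.1 a.2.1 a.2.2.1).2 a.2.2.2⟩) ⟨?_, ?_⟩
  · rintro ⟨w, u, hu, hu2⟩ ⟨w', u', hu', hu2'⟩ h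
    obtain ⟨rfl, rfl⟩ := cellSub_injective hu hu' fun i hi =>
      congrFun (congrArg Subtype.val h) (⟨i, Nat.lt_succ_iff.2 hi⟩ : Fin (n + 1))
    rfl
  · rintro ⟨f, hf0, hf1, hmono, hdim, hhess⟩
    let g : ℕ → Submodule F (Fin n → F) := fun i =>
      f ⟨min i n, Nat.lt_succ_of_le (min_le_right _ _)⟩
    obtain ⟨w, u, hu, heq⟩ := exists_cellSub_eq g
      (fun i j hij _ => hmono (by
        rw [Fin.mk_le_mk]
        exact min_le_min_right n hij))
      (fun i hi => by rw [hdim]; exact min_eq_left hi)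
    have heq' : ∀ i : Fin (n + 1), cellSub w u i = f i := by
      intro i
      rw [heq i (Nat.lt_succ_iff.1 i.2)]
      exact congrArg f (Fin.ext (min_eq_left (Nat.lt_succ_iff.1 i.2)))
    refine ⟨⟨w, u, hu, (hiff w u hu).1 fun i => ?_⟩, Subtype.ext (funext heq')⟩
    have h := hhess i
    rw [← heq', ← heq'] at h
    exact h
end
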